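/- Let Z : Ω → ℝ^{d_z} be a measurable random variable on a probability space (Ω, P), let D_x be a set, and let l, f, u : D_x × ℝ^{d_z} → ℝ be such that for every x ∈ D_x the maps z ↦ l(x,z), z ↦ f(x,z), z ↦ u(x,z) are Borel measurable and l(x,z) ≤ f(x,z) ≤ u(x,z) for all x ∈ D_x, z ∈ ℝ^{d_z}. Fix α ∈ (0,1), let x* ∈ D_x be any point (in particular a maximizer of x ↦ VaR_α(f(x,Z))), and let x_t ∈ D_x satisfy VaR_α(u(x, Z)) ≤ VaR_α(u(x_t, Z)) for all x ∈ D_x (i.e., x_t maximizes the upper confidence bound of VaR). Then the instantaneous regret is bounded by the width of the VaR confidence interval at x_t: VaR_α(f(x*, Z)) − VaR_α(f(x_t, Z)) ≤ VaR_α(u(x_t, Z)) − VaR_α(l(x_t, Z)). -/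

import Mathlib

open MeasureTheory Set

/-- Value-at-risk of a real random variable `X` at level `α`. -/
noncomputable def VaR {Ω : Type*} [MeasurableSpace Ω] (P : Measure Ω)
    (X : Ω → ℝ) (α : ℝ) : ℝ :=
  sInf {w : ℝ | ENNReal.ofReal α ≤ P {ω | X ω ≤ w}}

/-!
`VaR` is monotone in the random variable: if `X ≤ Y` almost surely, then every threshold admissible
for `Y` is admissible for `X`. Since an empty or unbounded set of reals has infimum `0`, this
requires the thresholds of `X` to be bounded below and those of `Y` to exist, which is continuity
of the measure along `{X ≤ w}` as `w → -∞` and along `{Y ≤ w}` as `w → ∞`. The regret bound then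
follows from `VaR (f x*) ≤ VaR (u x*) ≤ VaR (u x_t)` and `VaR (l x_t) ≤ VaR (f x_t)`.
-/

open Filter
open scoped Topology

section LimitsOfDistributionFunction

variable {Ω R : Type*} [MeasurableSpace Ω] [Preorder R]

theorem tendsto_measure_setOf_le_atTop [(atTop : Filter R).IsCountablyGenerated]
    (μ : Measure Ω) (X : Ω → R) :
    Tendsto (fun w => μ {ω | X ω ≤ w}) atTop (𝓝 (μ univ)) := by
  have h_union : ⋃ w, {ω | X ω ≤ w} = univ :=
    iUnion_eq_univ_iff.2 fun ω => ⟨X ω, le_rfl⟩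
  rw [← h_union]
  exact tendsto_measure_iUnion_atTop fun _ _ hvw _ hω => le_trans hω hvw

theorem tendsto_measure_setOf_le_atBot [Nonempty R] [NoMinOrder R]
    [(atBot : Filter R).IsCountablyGenerated] [TopologicalSpace R] [ClosedIicTopology R]
    [MeasurableSpace R] [OpensMeasurableSpace R] (μ : Measure Ω) [IsFiniteMeasure μ]
    {X : Ω → R} (hX : AEMeasurable X μ) :
    Tendsto (fun w => μ {ω | X ω ≤ w}) atBot (𝓝 0) := by
  have h_inter : ⋂ w, {ω | X ω ≤ w} = ∅ :=
    iInter_eq_empty_iff.2 fun ω => (exists_lt (X ω)).imp fun _ hw => hw.not_ge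
  rw [← measure_empty (μ := μ), ← h_inter]
  exact tendsto_measure_iInter_atBot (fun _ => hX.nullMeasurableSet_preimage measurableSet_Iic)
    (fun _ _ hvw _ hω => le_trans hω hvw) ⟨Classical.arbitrary R, measure_ne_top μ _⟩

end LimitsOfDistributionFunction

namespace VaR

variable {Ω : Type*} [MeasurableSpace Ω] (P : Measure Ω) {X Y : Ω → ℝ} {α : ℝ}

theorem nonempty_thresholds (X : Ω → ℝ) (hα : ENNReal.ofReal α < P univ) :
    {w : ℝ | ENNReal.ofReal α ≤ P {ω | X ω ≤ w}}.Nonempty :=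
  ((tendsto_measure_setOf_le_atTop P X).eventually_const_le hα).exists

theorem bddBelow_thresholds [IsFiniteMeasure P] (hX : AEMeasurable X P) (hα : 0 < α) :
    BddBelow {w : ℝ | ENNReal.ofReal α ≤ P {ω | X ω ≤ w}} := by
  obtain ⟨v, hv⟩ : ∃ v, P {ω | X ω ≤ v} < ENNReal.ofReal α :=
    ((tendsto_measure_setOf_le_atBot P hX).eventually_lt_const (ENNReal.ofReal_pos.2 hα)).exists
  refine ⟨v, fun w hw => le_of_not_gt fun hwv => ?_⟩
  have h_mono : P {ω | X ω ≤ w} ≤ P {ω | X ω ≤ v} :=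
    measure_mono fun _ hω => le_trans hω hwv.le
  exact (hw.trans h_mono).not_gt hv

theorem mono [IsFiniteMeasure P] (hX : AEMeasurable X P) (hXY : X ≤ᵐ[P] Y)
    (hα₀ : 0 < α) (hα₁ : ENNReal.ofReal α < P univ) : VaR P X α ≤ VaR P Y α :=
  csInf_le_csInf (bddBelow_thresholds P hX hα₀) (nonempty_thresholds P Y hα₁) fun _ hw =>
    hw.trans (measure_mono_ae (hXY.mono fun _ hω hYω => le_trans hω hYω))

end VaR

theorem stmt8_general {Ω : Type*} [MeasurableSpace Ω] (P : Measure Ω) [IsFiniteMeasure P]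
    {D : Type*} {L F U : D → Ω → ℝ} (hL : ∀ x, AEMeasurable (L x) P)
    (hF : ∀ x, AEMeasurable (F x) P) (hLF : ∀ x, L x ≤ᵐ[P] F x) (hFU : ∀ x, F x ≤ᵐ[P] U x)
    {α : ℝ} (hα₀ : 0 < α) (hα₁ : ENNReal.ofReal α < P univ) (xstar : D) {xt : D}
    (hxt : ∀ x, VaR P (U x) α ≤ VaR P (U xt) α) :
    VaR P (F xstar) α - VaR P (F xt) α ≤ VaR P (U xt) α - VaR P (L xt) α := by
  have h_upper : VaR P (F xstar) α ≤ VaR P (U xt) α :=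
    (VaR.mono P (hF xstar) (hFU xstar) hα₀ hα₁).trans (hxt xstar)
  have h_lower : VaR P (L xt) α ≤ VaR P (F xt) α :=
    VaR.mono P (hL xt) (hLF xt) hα₀ hα₁
  exact sub_le_sub h_upper h_lower

theorem stmt8 {Ω : Type*} [MeasurableSpace Ω] (P : Measure Ω)
    [IsProbabilityMeasure P] {dz : ℕ} (Z : Ω → (Fin dz → ℝ)) (hZ : Measurable Z)
    {Dx : Type*} (l f u : Dx → (Fin dz → ℝ) → ℝ)
    (hl : ∀ x : Dx, Measurable (l x)) (hf : ∀ x : Dx, Measurable (f x))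
    (hu : ∀ x : Dx, Measurable (u x))
    (hlf : ∀ (x : Dx) (z : Fin dz → ℝ), l x z ≤ f x z)
    (hfu : ∀ (x : Dx) (z : Fin dz → ℝ), f x z ≤ u x z)
    (α : ℝ) (hα : α ∈ Set.Ioo (0 : ℝ) 1)
    (xstar xt : Dx)
    (hxt : ∀ x : Dx, VaR P (fun ω => u x (Z ω)) α ≤ VaR P (fun ω => u xt (Z ω)) α) :
    VaR P (fun ω => f xstar (Z ω)) α - VaR P (fun ω => f xt (Z ω)) α ≤
      VaR P (fun ω => u xt (Z ω)) α - VaR P (fun ω => l xt (Z ω)) α := by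
  exact stmt8_general P (fun x => ((hl x).comp hZ).aemeasurable)
    (fun x => ((hf x).comp hZ).aemeasurable) (fun x => .of_forall fun ω => hlf x (Z ω))
    (fun x => .of_forall fun ω => hfu x (Z ω)) hα.1 (by simpa using hα.2) xstar hxt
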